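/- arXiv:1504.04058 — 3 statements merged into one kernel-verified Lean document; each statement's English description precedes it below -/
import Mathlib

section
/- Fix m ≥ 2, complex vector spaces V_1,...,V_m and W, linear maps R_p : W → V_p for p = 2,...,m, and linear maps ρ_p^R : V_p → W for p = 1,...,m-1. Given w_q ∈ V_q for q = 1,...,m, define the per-source right-going components v_{p,q} ∈ V_p for 1 ≤ q ≤ p ≤ m by v_{q,q} := w_q and v_{p,q} := R_p(ρ_{p-1}^R(v_{p-1,q})) for q < p ≤ m. Define the accumulated sweep by a_1 := ρ_1^R(w_1), and for p = 2,...,m: S_p := R_p(a_{p-1}) and (for p ≤ m-1) a_p := ρ_p^R(S_p) + ρ_p^R(w_p). Then for every p = 2,...,m, S_p = Σ_{q=1}^{p-1} v_{p,q}. -/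
/-! The invariant of the accumulated sweep is `a p = ∑_{q=1}^{p} ρR p (v p q)`: the accumulated
boundary value is the sum of the right traces of all waves coming from sources `1, …, p`. It
propagates by induction on `p`, because `R (p + 1)` and `ρR (p + 1)` commute with finite sums,
and applying `R (p + 1)` to it yields the formula for `S (p + 1)`. -/

/-- Correctness of the boundary-value accumulation for the right-going sweep.
Indices are 1-based: subdomains are `p = 1, …, m`.  Given the wave `w q` generated on
subdomain `q` by the local force, the per-source right-going components satisfy
`v q q = w q` and `v p q = R p (ρR (p-1) (v (p-1) q))` for `q < p ≤ m`.  The accumulated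
sweep is `a 1 = ρR 1 (w 1)`, `S p = R p (a (p-1))` for `2 ≤ p ≤ m`, and
`a p = ρR p (S p) + ρR p (w p)` for `2 ≤ p ≤ m-1`.  Then `S p = ∑_{q=1}^{p-1} v p q`
for every `2 ≤ p ≤ m`. -/
theorem additive_sweep_right_accumulation
    (m : ℕ) (hm : 2 ≤ m)
    (V : ℕ → Type) [∀ p, AddCommGroup (V p)] [∀ p, Module ℂ (V p)]
    (W : Type) [AddCommGroup W] [Module ℂ W]
    (R : ∀ p, W →ₗ[ℂ] V p) (ρR : ∀ p, V p →ₗ[ℂ] W)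
    (w : ∀ q, V q) (v : ∀ p q, V p)
    (a : ℕ → W) (S : ∀ p, V p)
    (hdiag : ∀ q, 1 ≤ q → q ≤ m → v q q = w q)
    (hrec : ∀ p q, 1 ≤ q → q < p → p ≤ m →
      v p q = R p (ρR (p - 1) (v (p - 1) q)))
    (ha1 : a 1 = ρR 1 (w 1))
    (hS : ∀ p, 2 ≤ p → p ≤ m → S p = R p (a (p - 1)))
    (ha : ∀ p, 2 ≤ p → p ≤ m - 1 → a p = ρR p (S p) + ρR p (w p)) :
    ∀ p, 2 ≤ p → p ≤ m → S p = ∑ q ∈ Finset.Icc 1 (p - 1), v p q := by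
  -- One sweep step: if `a p` is the sum of the right traces of all per-source waves on
  -- subdomain `p`, linearity of `R (p + 1)` gives the claim for `S (p + 1)`.
  have step : ∀ p, 1 ≤ p → p + 1 ≤ m → a p = ∑ q ∈ Finset.Icc 1 p, ρR p (v p q) →
      S (p + 1) = ∑ q ∈ Finset.Icc 1 p, v (p + 1) q := by
    intro p hp hpm hap
    rw [hS (p + 1) (by omega) hpm, Nat.add_sub_cancel, hap, map_sum]
    refine Finset.sum_congr rfl fun q hq => ?_
    rw [Finset.mem_Icc] at hq
    rw [hrec (p + 1) q hq.1 (by omega) hpm, Nat.add_sub_cancel]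
  have trace : ∀ p, 1 ≤ p → p + 1 ≤ m → a p = ∑ q ∈ Finset.Icc 1 p, ρR p (v p q) := by
    intro p hp
    induction p, hp using Nat.le_induction with
    | base =>
      intro hpm
      rw [Finset.Icc_self, Finset.sum_singleton, ha1, hdiag 1 le_rfl (by omega)]
    | succ p hp ih =>
      intro hpm
      -- The last summand `q = p + 1` is the newly generated wave `w (p + 1)`.
      rw [ha (p + 1) (by omega) (by omega), step p hp (by omega) (ih (by omega)), map_sum,
        Finset.sum_Icc_succ_top (by omega), hdiag (p + 1) (by omega) (by omega)]
  intro p hp hpm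
  obtain ⟨k, rfl⟩ : ∃ k, p = k + 1 := ⟨p - 1, by omega⟩
  exact step k (by omega) hpm (trace k (by omega) hpm)
end

section
/- Fix m ≥ 2, complex vector spaces V_1,...,V_m and W, linear maps R_p : W → V_p (p = 2,...,m), L_p : W → V_p (p = 1,...,m-1), ρ_p^R : V_p → W (p = 1,...,m-1), and ρ_p^L : V_p → W (p = 2,...,m). Given w_q ∈ V_q for q = 1,...,m, define v_{p,q} ∈ V_p for all 1 ≤ p,q ≤ m by: v_{q,q} := w_q; v_{p,q} := R_p(ρ_{p-1}^R(v_{p-1,q})) for q < p; v_{p,q} := L_p(ρ_{p+1}^L(v_{p+1,q})) for p < q. Define the accumulated sweeps: a_1 := ρ_1^R(w_1); S_p := R_p(a_{p-1}) and a_p := ρ_p^R(S_p) + ρ_p^R(w_p) for p = 2,...,m (the definition of a_p needed only for p ≤ m-1); b_m := ρ_m^L(w_m); T_p := L_p(b_{p+1}) and b_p := ρ_p^L(T_p) + ρ_p^L(w_p) for p = m-1,...,1 (the definition of b_p needed only for p ≥ 2). Set ũ_1 := w_1 + T_1, ũ_p := S_p + w_p + T_p for p = 2,...,m-1, and ũ_m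 := S_m + w_m. Then for every p = 1,...,m, ũ_p = Σ_{q=1}^m v_{p,q}. -/
/-!
By linearity of the boundary traces and the auxiliary Green's operators, the accumulated right-going
boundary value `a p` is the right trace on `X_p` of the sum of the components `v p q` with `q ≤ p`,
so `S p` is the sum of the `v p q` with `q < p`. Symmetrically, `b p` is the left trace of the sum
over `q ≥ p` and `T p` is the sum over `q > p`. These are proved by upward and downward induction
on `p`; the result follows by splitting the sum over `q` at `q = p`.
-/

/-- The output of the additive sweeping procedure (computed with boundary-value
accumulation) coincides with the superposition of all per-source components.
Indices are 1-based: subdomains are `p = 1, …, m`.  The per-source components satisfy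
`v q q = w q`, `v p q = R p (ρR (p-1) (v (p-1) q))` for `q < p`, and
`v p q = L p (ρL (p+1) (v (p+1) q))` for `p < q`.  The accumulated sweeps are
`a 1 = ρR 1 (w 1)`, `S p = R p (a (p-1))`, `a p = ρR p (S p) + ρR p (w p)`;
`b m = ρL m (w m)`, `T p = L p (b (p+1))`, `b p = ρL p (T p) + ρL p (w p)`; and
`ũ 1 = w 1 + T 1`, `ũ p = S p + w p + T p` for `2 ≤ p ≤ m-1`, `ũ m = S m + w m`.
Then `ũ p = ∑_{q=1}^{m} v p q` for every `1 ≤ p ≤ m`. -/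
theorem additive_sweep_superposition
    (m : ℕ) (hm : 2 ≤ m)
    (V : ℕ → Type) [∀ p, AddCommGroup (V p)] [∀ p, Module ℂ (V p)]
    (W : Type) [AddCommGroup W] [Module ℂ W]
    (R : ∀ p, W →ₗ[ℂ] V p) (L : ∀ p, W →ₗ[ℂ] V p)
    (ρR : ∀ p, V p →ₗ[ℂ] W) (ρL : ∀ p, V p →ₗ[ℂ] W)
    (w : ∀ q, V q) (v : ∀ p q, V p)
    (a b : ℕ → W) (S T u : ∀ p, V p)
    (hdiag : ∀ q, 1 ≤ q → q ≤ m → v q q = w q)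
    (hrecR : ∀ p q, 1 ≤ q → q < p → p ≤ m →
      v p q = R p (ρR (p - 1) (v (p - 1) q)))
    (hrecL : ∀ p q, 1 ≤ p → p < q → q ≤ m →
      v p q = L p (ρL (p + 1) (v (p + 1) q)))
    (ha1 : a 1 = ρR 1 (w 1))
    (hS : ∀ p, 2 ≤ p → p ≤ m → S p = R p (a (p - 1)))
    (ha : ∀ p, 2 ≤ p → p ≤ m - 1 → a p = ρR p (S p) + ρR p (w p))
    (hbm : b m = ρL m (w m))
    (hT : ∀ p, 1 ≤ p → p ≤ m - 1 → T p = L p (b (p + 1)))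
    (hb : ∀ p, 2 ≤ p → p ≤ m - 1 → b p = ρL p (T p) + ρL p (w p))
    (hu1 : u 1 = w 1 + T 1)
    (hui : ∀ p, 2 ≤ p → p ≤ m - 1 → u p = S p + w p + T p)
    (hum : u m = S m + w m) :
    ∀ p, 1 ≤ p → p ≤ m → u p = ∑ q ∈ Finset.Icc 1 m, v p q := by
  have stepR : ∀ p, 1 ≤ p → p + 1 ≤ m → a p = ρR p (∑ q ∈ Finset.Ico 1 (p + 1), v p q) →
      S (p + 1) = ∑ q ∈ Finset.Ico 1 (p + 1), v (p + 1) q := by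
    intro p h1 h2 h
    rw [hS (p + 1) (by omega) h2, Nat.add_sub_cancel, h, map_sum, map_sum]
    refine Finset.sum_congr rfl fun q hq => ?_
    rw [Finset.mem_Ico] at hq
    exact (hrecR (p + 1) q hq.1 hq.2 h2).symm
  have hA : ∀ p, 1 ≤ p → p + 1 ≤ m → a p = ρR p (∑ q ∈ Finset.Ico 1 (p + 1), v p q) := by
    intro p h1
    induction p, h1 using Nat.le_induction with
    | base =>
      intro _
      simp [ha1, hdiag 1 le_rfl (by omega)]
    | succ p h1 ih =>
      intro h2
      rw [ha (p + 1) (by omega) (by omega), stepR p h1 (by omega) (ih (by omega)),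
        Finset.sum_Ico_succ_top (b := p + 1) (by omega), hdiag (p + 1) (by omega) (by omega), map_add]
  have stepL : ∀ p, 1 ≤ p → p + 1 ≤ m →
      b (p + 1) = ρL (p + 1) (∑ q ∈ Finset.Ico (p + 1) (m + 1), v (p + 1) q) →
      T p = ∑ q ∈ Finset.Ico (p + 1) (m + 1), v p q := by
    intro p h1 h2 h
    rw [hT p h1 (by omega), h, map_sum, map_sum]
    refine Finset.sum_congr rfl fun q hq => ?_
    rw [Finset.mem_Ico] at hq
    exact (hrecL p q h1 (by omega) (by omega)).symm
  -- The downward induction is run on the distance `k = m - p` to the last subdomain.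
  have hB : ∀ k p, p + k = m → 2 ≤ p → b p = ρL p (∑ q ∈ Finset.Ico p (m + 1), v p q) := by
    intro k
    induction k with
    | zero =>
      rintro p rfl h2
      simpa [hdiag p (by omega) le_rfl] using hbm
    | succ k ih =>
      intro p hp h2
      rw [hb p h2 (by omega), stepL p (by omega) (by omega) (ih (p + 1) (by omega) (by omega)),
        Finset.sum_eq_sum_Ico_succ_bot (by omega : p < m + 1), hdiag p (by omega) (by omega),
        map_add, add_comm]
  have hSsum : ∀ p, 2 ≤ p → p ≤ m → S p = ∑ q ∈ Finset.Ico 1 p, v p q := by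
    intro p h1 h2
    obtain ⟨p, rfl⟩ : ∃ k, p = k + 1 := ⟨p - 1, by omega⟩
    exact stepR p (by omega) h2 (hA p (by omega) h2)
  have hTsum : ∀ p, 1 ≤ p → p + 1 ≤ m → T p = ∑ q ∈ Finset.Ico (p + 1) (m + 1), v p q :=
    fun p h1 h2 => stepL p h1 h2 (hB (m - (p + 1)) (p + 1) (by omega) (by omega))
  intro p h1 h2
  have hsplit : ∑ q ∈ Finset.Icc 1 m, v p q =
      ∑ q ∈ Finset.Ico 1 p, v p q + w p + ∑ q ∈ Finset.Ico (p + 1) (m + 1), v p q := by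
    have hI : Finset.Icc 1 m = Finset.Ico 1 (m + 1) := by ext; simp
    rw [hI, ← Finset.sum_Ico_consecutive _ h1 (by omega : p ≤ m + 1),
      Finset.sum_eq_sum_Ico_succ_bot (by omega : p < m + 1), hdiag p h1 h2, add_assoc]
  rw [hsplit]
  rcases Nat.eq_or_lt_of_le h1 with rfl | h1'
  · rw [hu1, hTsum 1 le_rfl (by omega)]
    simp
  · rcases Nat.eq_or_lt_of_le h2 with rfl | h2'
    · rw [hum, hSsum p (by omega) le_rfl]
      simp
    · rw [hui p (by omega) (by omega), hSsum p (by omega) h2, hTsum p h1 (by omega)]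
end

section
/- In the setting of the additive sweep (complex vector spaces V_1,...,V_m and W, linear maps R_p, L_p, ρ_p^R, ρ_p^L, inputs w_q ∈ V_q, per-source components v_{p,q}, and outputs ũ_p := Σ-form S_p + w_p + T_p as produced by the accumulated sweeps), suppose additionally that N = d_1 + ... + d_m, V_p = ℂ^{d_p}, A is an invertible N×N complex matrix with blocks G_{p,q} := P_p A^{-1} E_q, f ∈ ℂ^N, and that the per-source components are exact, i.e. v_{p,q} = G_{p,q}(P_q f) for all 1 ≤ p,q ≤ m. Then the sweep output is the exact solution: for every p, ũ_p = P_p (A^{-1} f). -/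
/-!
By linearity, each accumulated sweep transports the sum of the per-source components: for every
block `p` but the last, `a p = ρR p (∑_{q ≤ p} v p q)`, so `S p = ∑_{q < p} v p q` for every `p` but
the first; symmetrically, `b p = ρL p (∑_{q ≥ p} v p q)` for every `p` but the first, so
`T p = ∑_{q > p} v p q` for every `p` but the last. With `w p = v p p` the output is
`u p = ∑_q v p q`, including at the two end blocks, where one of the sums is empty. Exactness turns
this into `P_p A⁻¹ (∑_q E_q P_q f)`, and `∑_q E_q P_q` is the identity
(`sum_blockExtend_blockRestrict`).
-/

open Matrix

/-- Restriction of a vector of `ℂ^N` (coordinates indexed by the sigma type encoding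
the partition into `m` consecutive blocks of sizes `d p`) to the `p`-th block. -/
def blockRestrict {m : ℕ} {d : Fin m → ℕ} (p : Fin m)
    (v : ((q : Fin m) × Fin (d q)) → ℂ) : Fin (d p) → ℂ :=
  fun i => v ⟨p, i⟩

/-- Extension by zero of a vector of `ℂ^{d q}` from the `q`-th block into `ℂ^N`. -/
def blockExtend {m : ℕ} {d : Fin m → ℕ} (q : Fin m)
    (x : Fin (d q) → ℂ) : ((p : Fin m) × Fin (d p)) → ℂ :=
  fun j => if h : j.1 = q then x (h ▸ j.2) else 0

/-- The block projections resolve the identity: `∑_q E_q P_q = 1`. -/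
lemma sum_blockExtend_blockRestrict {m : ℕ} {d : Fin m → ℕ}
    (f : ((p : Fin m) × Fin (d p)) → ℂ) :
    ∑ q, blockExtend q (blockRestrict q f) = f := by
  ext ⟨p, i⟩
  rw [Finset.sum_apply, Finset.sum_eq_single p]
  · simp [blockExtend, blockRestrict]
  · intro q _ hq
    simp [blockExtend, hq.symm]
  · simp

lemma sum_filter_le_eq {m : ℕ} {V : Type*} [AddCommGroup V] (g : Fin m → V) (p : Fin m) :
    ∑ q with q ≤ p, g q = ∑ q with q < p, g q + g p := by
  have h : Finset.univ.filter (fun q => q ≤ p) = insert p (Finset.univ.filter (fun q => q < p)) := by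
    ext q
    simp [le_iff_eq_or_lt]
  rw [h, Finset.sum_insert (by simp), add_comm]

lemma sum_filter_ge_eq {m : ℕ} {V : Type*} [AddCommGroup V] (g : Fin m → V) (p : Fin m) :
    ∑ q with p ≤ q, g q = ∑ q with p < q, g q + g p := by
  have h : Finset.univ.filter (fun q => p ≤ q) = insert p (Finset.univ.filter (fun q => p < q)) := by
    ext q
    simp [le_iff_eq_or_lt, eq_comm]
  rw [h, Finset.sum_insert (by simp), add_comm]

lemma sum_split {m : ℕ} {V : Type*} [AddCommGroup V] (g : Fin m → V) (p : Fin m) :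
    ∑ q, g q = ∑ q with q < p, g q + g p + ∑ q with p < q, g q := by
  rw [← sum_filter_le_eq, ← Finset.sum_filter_add_sum_filter_not _ (fun q => q ≤ p)]
  simp only [not_le]

/-- If the per-source components of the additive sweep are exact, i.e.
`v p q = G_{p,q} (P_q f)` where `G_{p,q} = P_p A⁻¹ E_q` are the blocks of the Green's
matrix, then the accumulated sweep output is the exact solution: `ũ p = P_p (A⁻¹ f)`
for every block `p`.  Here the subdomains are indexed by `Fin m` (0-based, so block `0`
is the paper's block `1` and block `m-1` is the paper's block `m`), `V p = ℂ^{d p}`,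
and the sweep data `w, v, a, b, S, T, ũ` satisfy the defining recurrences of the
additive sweeping preconditioner. -/
theorem additive_sweep_exact
    {m : ℕ} (hm : 2 ≤ m) (d : Fin m → ℕ)
    (A : Matrix ((p : Fin m) × Fin (d p)) ((p : Fin m) × Fin (d p)) ℂ)
    (hA : IsUnit A) (f : ((p : Fin m) × Fin (d p)) → ℂ)
    (W : Type) [AddCommGroup W] [Module ℂ W]
    (R : ∀ p : Fin m, W →ₗ[ℂ] (Fin (d p) → ℂ))
    (L : ∀ p : Fin m, W →ₗ[ℂ] (Fin (d p) → ℂ))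
    (ρR : ∀ p : Fin m, (Fin (d p) → ℂ) →ₗ[ℂ] W)
    (ρL : ∀ p : Fin m, (Fin (d p) → ℂ) →ₗ[ℂ] W)
    (w : ∀ p : Fin m, Fin (d p) → ℂ)
    (v : ∀ p q : Fin m, Fin (d p) → ℂ)
    (a b : Fin m → W)
    (S T u : ∀ p : Fin m, Fin (d p) → ℂ)
    -- per-source components:
    (hdiag : ∀ q, v q q = w q)
    (hrecR : ∀ (i : ℕ) (hi : i + 1 < m) (hi' : i < m) (q : Fin m), (q : ℕ) ≤ i →
      v ⟨i + 1, hi⟩ q = R ⟨i + 1, hi⟩ (ρR ⟨i, hi'⟩ (v ⟨i, hi'⟩ q)))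
    (hrecL : ∀ (i : ℕ) (hi : i + 1 < m) (hi' : i < m) (q : Fin m), i < (q : ℕ) →
      v ⟨i, hi'⟩ q = L ⟨i, hi'⟩ (ρL ⟨i + 1, hi⟩ (v ⟨i + 1, hi⟩ q)))
    -- accumulated right-going sweep:
    (ha0 : ∀ (h0 : 0 < m), a ⟨0, h0⟩ = ρR ⟨0, h0⟩ (w ⟨0, h0⟩))
    (hS : ∀ (i : ℕ) (hi : i + 1 < m) (hi' : i < m),
      S ⟨i + 1, hi⟩ = R ⟨i + 1, hi⟩ (a ⟨i, hi'⟩))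
    (ha : ∀ (i : ℕ) (hi : i + 3 ≤ m) (h1 : i + 1 < m),
      a ⟨i + 1, h1⟩ = ρR ⟨i + 1, h1⟩ (S ⟨i + 1, h1⟩) + ρR ⟨i + 1, h1⟩ (w ⟨i + 1, h1⟩))
    -- accumulated left-going sweep:
    (hbm : ∀ (h : m - 1 < m), b ⟨m - 1, h⟩ = ρL ⟨m - 1, h⟩ (w ⟨m - 1, h⟩))
    (hT : ∀ (i : ℕ) (hi : i + 1 < m) (hi' : i < m),
      T ⟨i, hi'⟩ = L ⟨i, hi'⟩ (b ⟨i + 1, hi⟩))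
    (hb : ∀ (i : ℕ) (hi : i + 3 ≤ m) (h1 : i + 1 < m),
      b ⟨i + 1, h1⟩ = ρL ⟨i + 1, h1⟩ (T ⟨i + 1, h1⟩) + ρL ⟨i + 1, h1⟩ (w ⟨i + 1, h1⟩))
    -- sweep output:
    (hu1 : ∀ (h0 : 0 < m), u ⟨0, h0⟩ = w ⟨0, h0⟩ + T ⟨0, h0⟩)
    (hui : ∀ (i : ℕ) (hi : i + 3 ≤ m) (h1 : i + 1 < m),
      u ⟨i + 1, h1⟩ = S ⟨i + 1, h1⟩ + w ⟨i + 1, h1⟩ + T ⟨i + 1, h1⟩)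
    (hum : ∀ (h : m - 1 < m), u ⟨m - 1, h⟩ = S ⟨m - 1, h⟩ + w ⟨m - 1, h⟩)
    -- exactness of the per-source components:
    (hex : ∀ p q : Fin m,
      v p q = blockRestrict p (A⁻¹.mulVec (blockExtend q (blockRestrict q f)))) :
    ∀ p : Fin m, u p = blockRestrict p (A⁻¹.mulVec f) := by
  -- One step of either sweep maps the sum of components at a block to the sum at its neighbour.
  have stepR : ∀ (i : ℕ) (hi : i + 1 < m) (hi' : i < m),
      R ⟨i + 1, hi⟩ (ρR ⟨i, hi'⟩ (∑ q with q ≤ (⟨i, hi'⟩ : Fin m), v ⟨i, hi'⟩ q)) =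
        ∑ q with q < (⟨i + 1, hi⟩ : Fin m), v ⟨i + 1, hi⟩ q := by
    intro i hi hi'
    rw [map_sum, map_sum]
    refine Finset.sum_congr ?_ ?_
    · ext q
      simp [Fin.le_def, Fin.lt_def]
    · intro q hq
      refine (hrecR i hi hi' q ?_).symm
      simpa [Fin.lt_def, Nat.lt_succ_iff] using hq
  have stepL : ∀ (i : ℕ) (hi : i + 1 < m) (hi' : i < m),
      L ⟨i, hi'⟩ (ρL ⟨i + 1, hi⟩ (∑ q with (⟨i + 1, hi⟩ : Fin m) ≤ q, v ⟨i + 1, hi⟩ q)) =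
        ∑ q with (⟨i, hi'⟩ : Fin m) < q, v ⟨i, hi'⟩ q := by
    intro i hi hi'
    rw [map_sum, map_sum]
    refine Finset.sum_congr ?_ ?_
    · ext q
      simp [Fin.le_def, Fin.lt_def]
    · intro q hq
      refine (hrecL i hi hi' q ?_).symm
      simpa [Fin.lt_def] using hq
  -- The recurrence for `a` stops at the last block but one, whence the bound `i + 1 < m`.
  have haS : ∀ (i : ℕ) (hi : i + 1 < m) (hi' : i < m),
      a ⟨i, hi'⟩ = ρR ⟨i, hi'⟩ (∑ q with q ≤ (⟨i, hi'⟩ : Fin m), v ⟨i, hi'⟩ q) := by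
    intro i
    induction i with
    | zero =>
      intro hi hi'
      have hempty : Finset.univ.filter (fun q => q < (⟨0, hi'⟩ : Fin m)) = ∅ := by
        ext q
        simp [Fin.lt_def]
      rw [sum_filter_le_eq, hempty, Finset.sum_empty, zero_add, hdiag, ha0]
    | succ i ih =>
      intro hi hi'
      rw [ha i hi hi', hS i hi' (by omega), ih hi' (by omega), stepR, sum_filter_le_eq, hdiag,
        map_add]
  have hSsum : ∀ (i : ℕ) (hi : i + 1 < m),
      S ⟨i + 1, hi⟩ = ∑ q with q < (⟨i + 1, hi⟩ : Fin m), v ⟨i + 1, hi⟩ q := by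
    intro i hi
    rw [hS i hi (by omega), haS i hi, stepR]
  -- Downward induction from the last block; `k` is the distance to it.
  have hbT : ∀ (k i : ℕ) (_ : i + 2 + k = m) (hi : i + 1 < m),
      b ⟨i + 1, hi⟩ =
        ρL ⟨i + 1, hi⟩ (∑ q with (⟨i + 1, hi⟩ : Fin m) ≤ q, v ⟨i + 1, hi⟩ q) := by
    intro k
    induction k with
    | zero =>
      intro i hk hi
      have hempty : Finset.univ.filter (fun q => (⟨i + 1, hi⟩ : Fin m) < q) = ∅ := by
        ext q
        simp [Fin.lt_def]
        omega
      have hlast : (⟨i + 1, hi⟩ : Fin m) = ⟨m - 1, by omega⟩ := Fin.ext (by grind)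
      rw [sum_filter_ge_eq, hempty, Finset.sum_empty, zero_add, hdiag, hlast, hbm]
    | succ k ih =>
      intro i hk hi
      rw [hb i (by omega) hi, hT (i + 1) (by omega) hi, ih (i + 1) (by omega) (by omega), stepL,
        sum_filter_ge_eq, hdiag, map_add]
  have hTsum : ∀ (i : ℕ) (_ : i + 1 < m) (hi' : i < m),
      T ⟨i, hi'⟩ = ∑ q with (⟨i, hi'⟩ : Fin m) < q, v ⟨i, hi'⟩ q := by
    intro i hi hi'
    rw [hT i hi hi', hbT (m - (i + 2)) i (by omega) hi, stepL]
  have hu : ∀ p, u p = ∑ q, v p q := by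
    rintro ⟨i, hi'⟩
    rw [sum_split _ ⟨i, hi'⟩, hdiag]
    rcases i with _ | i
    · have hempty : Finset.univ.filter (fun q => q < (⟨0, hi'⟩ : Fin m)) = ∅ := by
        ext q
        simp [Fin.lt_def]
      rw [hempty, Finset.sum_empty, zero_add, hu1, hTsum 0 (by omega)]
    · by_cases hlt : i + 3 ≤ m
      · rw [hui i hlt, hSsum, hTsum (i + 1) (by omega)]
      · have hempty : Finset.univ.filter (fun q => (⟨i + 1, hi'⟩ : Fin m) < q) = ∅ := by
          ext q
          simp [Fin.lt_def]
          omega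
        have hlast : (⟨i + 1, hi'⟩ : Fin m) = ⟨m - 1, by omega⟩ := Fin.ext (by grind)
        rw [hempty, Finset.sum_empty, add_zero, ← hSsum, hlast, hum]
  intro p
  conv_rhs => rw [← sum_blockExtend_blockRestrict f, Matrix.mulVec_sum]
  rw [hu]
  ext j
  simp [hex, blockRestrict, Finset.sum_apply]
end
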